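/- (Theorem 5.2) Assume that the POP is feasible, i.e., S_m ≠ ∅, and that J = J_m is a face of CPP^A. Let ζ* := inf{ f_0(w) : w ∈ S_m } and ζ(J, Q^0) := inf{ ⟨Q^0, X⟩ : X ∈ J, ⟨H^0, X⟩ = 1 }, both infima taken in the extended reals. Then ζ* = ζ(J, Q^0) if and only if either f̄_0(0, w) ≥ 0 for every w ∈ S̃_m, or ζ* = −∞. -/

import Mathlib

open MvPolynomial

noncomputable section

open scoped Classical

variable {n : ℕ}

/-- The vector `u^A(x)` of monomials `x^α` for `α ∈ A`. -/
def uA (A : Finset (Fin (n+1) →₀ ℕ)) (x : Fin (n+1) → ℝ) (a : A) : ℝ :=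
  ∏ i, x i ^ (a : Fin (n+1) →₀ ℕ) i

/-- The rank-one moment matrix `u^A(x) u^A(x)ᵀ`. -/
def momMat (A : Finset (Fin (n+1) →₀ ℕ)) (x : Fin (n+1) → ℝ) : Matrix A A ℝ :=
  fun a b => uA A x a * uA A x b

/-- The cone `Γ^A = { u^A(x) u^A(x)ᵀ : x ∈ ℝ^{1+n}, x ≥ 0 }`. -/
def GammaA (A : Finset (Fin (n+1) →₀ ℕ)) : Set (Matrix A A ℝ) :=
  { X | ∃ x : Fin (n+1) → ℝ, (∀ i, 0 ≤ x i) ∧ X = momMat A x }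

/-- The extended completely positive cone `CPP^A = conv Γ^A`. -/
def CPPA (A : Finset (Fin (n+1) →₀ ℕ)) : Set (Matrix A A ℝ) :=
  convexHull ℝ (GammaA A)

/-- The trace inner product `⟨P, X⟩ = Σ_{a,b} P_{ab} X_{ab}`. -/
def ip {A : Finset (Fin (n+1) →₀ ℕ)} (P X : Matrix A A ℝ) : ℝ :=
  ∑ a : A, ∑ b : A, P a b * X a b

/-- The matrix `H^0` whose `(α^ω, α^ω)` entry is `1` and all other entries are `0`. -/
def H0mat (A : Finset (Fin (n+1) →₀ ℕ)) (ω : ℕ) : Matrix A A ℝ :=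
  fun a b =>
    if (a : Fin (n+1) →₀ ℕ) = Finsupp.single 0 ω ∧ (b : Fin (n+1) →₀ ℕ) = Finsupp.single 0 ω
    then 1 else 0

/-- `J_p = { X ∈ CPP^A : ⟨Q^i, X⟩ = 0 (i = 1,…,p) }`. -/
def Jset (A : Finset (Fin (n+1) →₀ ℕ)) (Q : ℕ → Matrix A A ℝ) (p : ℕ) :
    Set (Matrix A A ℝ) :=
  { X ∈ CPPA A | ∀ i, 1 ≤ i → i ≤ p → ip (Q i) X = 0 }

/-- `S̄_p = { x ∈ ℝ^{1+n}_+ : f̄_i(x) = 0 (i = 1,…,p) }`. -/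
def Sbar (fb : ℕ → MvPolynomial (Fin (n+1)) ℝ) (p : ℕ) : Set (Fin (n+1) → ℝ) :=
  { x | (∀ j, 0 ≤ x j) ∧ ∀ i, 1 ≤ i → i ≤ p → eval x (fb i) = 0 }

/-- `S̃_p = { w ∈ ℝ^n_+ : f̄_i(0, w) = 0 (i = 1,…,p) }`. -/
def Stilde (fb : ℕ → MvPolynomial (Fin (n+1)) ℝ) (p : ℕ) : Set (Fin n → ℝ) :=
  { w | (∀ j, 0 ≤ w j) ∧ ∀ i, 1 ≤ i → i ≤ p → eval (Fin.cons 0 w) (fb i) = 0 }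

/-- `S_p = { w ∈ ℝ^n_+ : f_i(w) = 0 (i = 1,…,p) }`. -/
def Sset (f : ℕ → MvPolynomial (Fin n) ℝ) (p : ℕ) : Set (Fin n → ℝ) :=
  { w | (∀ j, 0 ≤ w j) ∧ ∀ i, 1 ≤ i → i ≤ p → eval w (f i) = 0 }

/-- Infimum of a set of reals, taken in the extended reals. -/
def erInf (s : Set ℝ) : EReal := sInf ((fun r : ℝ => (r : EReal)) '' s)

/-- `F` is a face of the convex set `C`. -/
def IsFace {V : Type*} [AddCommGroup V] [Module ℝ V] (C F : Set V) : Prop :=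
  F ⊆ C ∧ Convex ℝ F ∧
    ∀ y ∈ C, ∀ z ∈ C, ∀ t : ℝ, 0 < t → t < 1 → (1 - t) • y + t • z ∈ F → y ∈ F ∧ z ∈ F

/-!
A face `J` of the convex cone `CPP^A` is generated by the matrices `u^A(x) u^A(x)ᵀ` it contains,
that is, by the `x ≥ 0` at which `f̄_1, …, f̄_m` vanish. So a real `c` satisfies
`c ⟨H^0, X⟩ ≤ ⟨Q^0, X⟩` on `J` if and only if `c x_0^{2ω} ≤ f̄_0(x)` for all these `x`, and
homogeneity, which reduces to `x_0 = 1` or `x_0 = 0`, splits this into `c ≤ ζ*` and `f̄_0(0, ·) ≥ 0`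
on `S̃_m`. On the other hand, since `J` is a cone with a nonempty slice `⟨H^0, X⟩ = 1`, the same
inequality on `J` says exactly `c ≤ ζ(J, Q^0)`. Hence `ζ*` and `ζ(J, Q^0)` have the same real lower
bounds precisely when `f̄_0(0, ·) ≥ 0` on `S̃_m` or `ζ*` has no real lower bound at all.
-/

section ExtendedReal

lemma coe_le_erInf_iff {s : Set ℝ} {c : ℝ} : (c : EReal) ≤ erInf s ↔ ∀ y ∈ s, c ≤ y := by
  simp only [erInf, le_sInf_iff, Set.forall_mem_image, EReal.coe_le_coe_iff]

lemma eq_of_forall_coe_le_iff {a b : EReal} (h : ∀ c : ℝ, (c : EReal) ≤ a ↔ (c : EReal) ≤ b) :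
    a = b :=
  le_antisymm (EReal.ge_of_forall_gt_iff_ge.1 fun c hc => (h c).1 hc.le)
    (EReal.ge_of_forall_gt_iff_ge.1 fun c hc => (h c).2 hc.le)

lemma eq_iff_or_eq_bot_of_forall_coe_le_iff {a b : EReal} {P : Prop}
    (h : ∀ c : ℝ, (c : EReal) ≤ b ↔ (c : EReal) ≤ a ∧ P) : a = b ↔ P ∨ a = ⊥ := by
  have no_coe_le_iff : a = ⊥ ↔ ∀ c : ℝ, ¬ (c : EReal) ≤ a := by
    simp only [EReal.eq_bot_iff_forall_lt, not_le]
  constructor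
  · rintro rfl
    refine or_iff_not_imp_right.2 fun ha => ?_
    obtain ⟨c, hc⟩ : ∃ c : ℝ, (c : EReal) ≤ a := by simpa [no_coe_le_iff] using ha
    exact ((h c).1 hc).2
  · rintro (hP | ha)
    · exact eq_of_forall_coe_le_iff fun c => by simp only [h c, hP, and_true]
    · exact eq_of_forall_coe_le_iff fun c => by
        simp only [h c, no_coe_le_iff.1 ha c, false_and]

end ExtendedReal

section Convexity

variable {E : Type*} [AddCommGroup E] [Module ℝ E]

lemma IsFace.subset_convexHull_inter {s F : Set E} (hF : IsFace (convexHull ℝ s) F) :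
    F ⊆ convexHull ℝ (F ∩ s) := by
  suffices h : convexHull ℝ s ⊆ {x | x ∈ convexHull ℝ s ∧ (x ∈ F → x ∈ convexHull ℝ (F ∩ s))} from
    fun x hx => (h (hF.1 hx)).2 hx
  refine convexHull_min
    (fun x hx => ⟨subset_convexHull ℝ s hx, fun hxF => subset_convexHull ℝ _ ⟨hxF, hx⟩⟩)
    (convex_iff_openSegment_subset.2 ?_)
  rintro y ⟨hy, hyF⟩ z ⟨hz, hzF⟩ _ ⟨a, b, ha, hb, hab, rfl⟩
  refine ⟨convex_convexHull ℝ s hy hz ha.le hb.le hab, fun hmem => ?_⟩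
  obtain rfl : a = 1 - b := by linarith
  obtain ⟨hyF', hzF'⟩ := hF.2.2 y hy z hz b hb (by linarith) hmem
  exact convex_convexHull ℝ _ (hyF hyF') (hzF hzF') ha.le hb.le hab

lemma forall_mem_convexHull_nonneg_iff {s : Set E} (l : E →ₗ[ℝ] ℝ) :
    (∀ x ∈ convexHull ℝ s, 0 ≤ l x) ↔ ∀ x ∈ s, 0 ≤ l x :=
  (convex_halfSpace_ge l.isLinear 0).convexHull_subset_iff

lemma IsFace.forall_nonneg_iff {s F : Set E} (hF : IsFace (convexHull ℝ s) F) (l : E →ₗ[ℝ] ℝ) :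
    (∀ x ∈ F, 0 ≤ l x) ↔ ∀ x ∈ F ∩ s, 0 ≤ l x :=
  ⟨fun h x hx => h x hx.1, fun h x hx =>
    (forall_mem_convexHull_nonneg_iff l).2 h x (hF.subset_convexHull_inter hx)⟩

lemma forall_slice_le_iff_forall_mul_le (K : ConvexCone ℝ E) {h q : E →ₗ[ℝ] ℝ}
    (hnonneg : ∀ x ∈ K, 0 ≤ h x) (hslice : ∃ x ∈ K, h x = 1) (c : ℝ) :
    (∀ x ∈ K, h x = 1 → c ≤ q x) ↔ ∀ x ∈ K, c * h x ≤ q x := by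
  refine ⟨fun hc x hx => ?_, fun hc x hx hx1 => by simpa [hx1] using hc x hx⟩
  rcases (hnonneg x hx).eq_or_lt with hx0 | hpos
  · obtain ⟨x₀, hx₀, hx₀1⟩ := hslice
    -- `x` is a direction of recession of the slice, along which `q` must stay above `c`.
    have ray_bound (t : ℝ) (ht : 0 < t) : c ≤ q x₀ + t * q x := by
      simpa using hc (x₀ + t • x) (K.add_mem hx₀ (K.smul_mem ht hx)) (by simp [hx₀1, ← hx0])
    rw [← hx0, mul_zero]
    by_contra! hneg
    obtain ⟨t, ht⟩ := exists_gt (max 0 ((q x₀ - c) / -q x))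
    obtain ⟨ht0, htlt⟩ := max_lt_iff.1 ht
    rw [div_lt_iff₀ (neg_pos.2 hneg)] at htlt
    linarith [ray_bound t ht0]
  · have := hc ((h x)⁻¹ • x) (K.smul_mem (inv_pos.2 hpos) hx) (by simp [hpos.ne'])
    rwa [map_smul, smul_eq_mul, inv_mul_eq_div, le_div_iff₀ hpos] at this

end Convexity

section Homogenization

lemma eval_smul_of_isHomogeneous {σ R : Type*} [CommSemiring R] {φ : MvPolynomial σ R} {d : ℕ}
    (hφ : φ.IsHomogeneous d) (s : R) (x : σ → R) : eval (s • x) φ = s ^ d * eval x φ := by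
  simp only [eval_eq, Finset.mul_sum]
  refine Finset.sum_congr rfl fun α hα => ?_
  have hdeg : ∑ i ∈ α.support, α i = d := by
    simp [← hφ (mem_support_iff.1 hα), Finsupp.weight_apply, Finsupp.sum]
  simp only [Pi.smul_apply, smul_eq_mul, mul_pow, Finset.prod_mul_distrib,
    Finset.prod_pow_eq_pow_sum, hdeg, mul_left_comm]

lemma eq_smul_cons_one {K : Type*} [DivisionRing K] {x : Fin (n + 1) → K} (hx : x 0 ≠ 0) :
    x = x 0 • (Fin.cons 1 ((x 0)⁻¹ • Fin.tail x) : Fin (n + 1) → K) := by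
  ext i
  refine Fin.cases (by simp) (fun j => ?_) i
  simp [Fin.tail, hx]

variable {f : ℕ → MvPolynomial (Fin n) ℝ} {fb : ℕ → MvPolynomial (Fin (n + 1)) ℝ} {p d : ℕ}

lemma cons_zero_mem_Sbar_iff {w : Fin n → ℝ} :
    (Fin.cons 0 w : Fin (n + 1) → ℝ) ∈ Sbar fb p ↔ w ∈ Stilde fb p := by
  simp [Sbar, Stilde, Fin.forall_fin_succ]

lemma cons_one_mem_Sbar_iff
    (hdehom : ∀ i ≤ p, ∀ w : Fin n → ℝ, eval (Fin.cons 1 w) (fb i) = eval w (f i))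
    {w : Fin n → ℝ} : (Fin.cons 1 w : Fin (n + 1) → ℝ) ∈ Sbar fb p ↔ w ∈ Sset f p := by
  simp +contextual [Sbar, Sset, Fin.forall_fin_succ, hdehom]

lemma smul_mem_Sbar_iff {e : ℕ → ℕ} (hhom : ∀ i ≤ p, (fb i).IsHomogeneous (e i)) {s : ℝ}
    (hs : 0 < s) {x : Fin (n + 1) → ℝ} : s • x ∈ Sbar fb p ↔ x ∈ Sbar fb p := by
  refine and_congr (by simp [hs]) (forall₃_congr fun i _ hi => ?_)
  simp [eval_smul_of_isHomogeneous (hhom i hi), hs.ne']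

lemma forall_mem_Sbar_mul_pow_le_iff (hd : d ≠ 0) (hhom : ∀ i ≤ p, (fb i).IsHomogeneous d)
    (hdehom : ∀ i ≤ p, ∀ w : Fin n → ℝ, eval (Fin.cons 1 w) (fb i) = eval w (f i)) (c : ℝ) :
    (∀ x ∈ Sbar fb p, c * x 0 ^ d ≤ eval x (fb 0)) ↔
      (∀ w ∈ Sset f p, c ≤ eval w (f 0)) ∧
        ∀ w ∈ Stilde fb p, 0 ≤ eval (Fin.cons 0 w) (fb 0) := by
  constructor
  · refine fun h => ⟨fun w hw => ?_, fun w hw => ?_⟩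
    · simpa [hdehom 0 p.zero_le] using h _ ((cons_one_mem_Sbar_iff hdehom).2 hw)
    · simpa [hd] using h _ (cons_zero_mem_Sbar_iff.2 hw)
  · rintro ⟨hS, hStilde⟩ x hx
    rcases (hx.1 0).eq_or_lt with hx0 | hx0
    · have hxeq : x = Fin.cons 0 (Fin.tail x) := by rw [hx0, Fin.cons_self_tail]
      calc c * x 0 ^ d = 0 := by simp [← hx0, hd]
        _ ≤ eval (Fin.cons 0 (Fin.tail x)) (fb 0) :=
          hStilde _ (cons_zero_mem_Sbar_iff.1 (hxeq ▸ hx))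
        _ = eval x (fb 0) := by rw [← hxeq]
    · have hxeq := eq_smul_cons_one hx0.ne'
      have hw := (cons_one_mem_Sbar_iff hdehom).1 ((smul_mem_Sbar_iff hhom hx0).1 (hxeq ▸ hx))
      calc c * x 0 ^ d = x 0 ^ d * c := mul_comm _ _
        _ ≤ x 0 ^ d * eval ((x 0)⁻¹ • Fin.tail x) (f 0) := by gcongr; exact hS _ hw
        _ = eval x (fb 0) := by
          rw [← hdehom 0 p.zero_le, ← eval_smul_of_isHomogeneous (hhom 0 p.zero_le), ← hxeq]

end Homogenization

section MomentMatrix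

open scoped Pointwise

variable {A : Finset (Fin (n + 1) →₀ ℕ)} {ω : ℕ}

lemma momMat_smul (hAdeg : ∀ α ∈ A, ∑ i, α i = ω) (s : ℝ) (x : Fin (n + 1) → ℝ) :
    momMat A (s • x) = s ^ (2 * ω) • momMat A x := by
  have huA (a : A) : uA A (s • x) a = s ^ ω * uA A x a := by
    simp only [uA, Pi.smul_apply, smul_eq_mul, mul_pow, Finset.prod_mul_distrib,
      Finset.prod_pow_eq_pow_sum, hAdeg a a.2]
  ext a b
  simp only [momMat, huA, Matrix.smul_apply, smul_eq_mul]
  ring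

lemma uA_single (hAtop : Finsupp.single 0 ω ∈ A) (x : Fin (n + 1) → ℝ) :
    uA A x ⟨_, hAtop⟩ = x 0 ^ ω := by
  simp [uA, Finsupp.single_apply, pow_ite]

lemma ip_H0mat (hAtop : Finsupp.single 0 ω ∈ A) (X : Matrix A A ℝ) :
    ip (H0mat A ω) X = X ⟨_, hAtop⟩ ⟨_, hAtop⟩ := by
  have hH0 (a b : A) :
      H0mat A ω a b = if a = ⟨_, hAtop⟩ then if b = ⟨_, hAtop⟩ then 1 else 0 else 0 := by
    simp only [H0mat, ← ite_and, Subtype.ext_iff]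
  simp [ip, hH0]

lemma ip_H0mat_momMat (hAtop : Finsupp.single 0 ω ∈ A) (x : Fin (n + 1) → ℝ) :
    ip (H0mat A ω) (momMat A x) = x 0 ^ (2 * ω) := by
  rw [ip_H0mat hAtop, momMat, uA_single hAtop, ← pow_add, two_mul]

/-- The linear functional `⟨P, ·⟩` on matrices indexed by `A × A`. -/
def ipLinear (P : Matrix A A ℝ) : Matrix A A ℝ →ₗ[ℝ] ℝ where
  toFun := ip P
  map_add' X Y := by
    simp only [ip, Matrix.add_apply, mul_add, Finset.sum_add_distrib]
  map_smul' c X := by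
    simp only [ip, Matrix.smul_apply, smul_eq_mul, mul_left_comm _ c, Finset.mul_sum,
      RingHom.id_apply]

@[simp]
lemma ipLinear_apply (P X : Matrix A A ℝ) : ipLinear P X = ip P X := rfl

lemma ip_H0mat_nonneg (hAtop : Finsupp.single 0 ω ∈ A) {X : Matrix A A ℝ} (hX : X ∈ CPPA A) :
    0 ≤ ip (H0mat A ω) X := by
  refine (forall_mem_convexHull_nonneg_iff (ipLinear (H0mat A ω))).2 ?_ X hX
  rintro _ ⟨x, hx, rfl⟩
  rw [ipLinear_apply, ip_H0mat_momMat hAtop]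
  exact pow_nonneg (hx 0) _

lemma smul_mem_CPPA (hω : ω ≠ 0) (hAdeg : ∀ α ∈ A, ∑ i, α i = ω) {s : ℝ} (hs : 0 < s)
    {X : Matrix A A ℝ} (hX : X ∈ CPPA A) : s • X ∈ CPPA A := by
  have hΓ : s • GammaA A ⊆ GammaA A := by
    refine Set.smul_set_subset_iff.2 ?_
    rintro _ ⟨x, hx, rfl⟩
    set r := s ^ ((2 * ω : ℕ) : ℝ)⁻¹
    have hr : r ^ (2 * ω) = s := Real.rpow_inv_natCast_pow hs.le (by simpa using hω)
    exact ⟨r • x, fun i => mul_nonneg (by positivity) (hx i), by rw [momMat_smul hAdeg, hr]⟩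
  refine convexHull_mono hΓ ?_
  rw [convexHull_smul]
  exact Set.smul_mem_smul_set hX

/-- The set `J_p` as a convex cone, for multi-indices of common degree `ω ≠ 0`: scaling `x` by a
`2ω`-th root of `s > 0` scales the generator `u^A(x) u^A(x)ᵀ` by `s`. -/
def Jcone (hω : ω ≠ 0) (hAdeg : ∀ α ∈ A, ∑ i, α i = ω) (Q : ℕ → Matrix A A ℝ) (p : ℕ) :
    ConvexCone ℝ (Matrix A A ℝ) where
  carrier := Jset A Q p
  smul_mem' s hs X hX := ⟨smul_mem_CPPA hω hAdeg hs hX.1, fun i h1 hi => by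
    rw [← ipLinear_apply, map_smul, ipLinear_apply, hX.2 i h1 hi, smul_zero]⟩
  add_mem' X hX Y hY := by
    refine ⟨?_, fun i h1 hi => by
      rw [← ipLinear_apply, map_add, ipLinear_apply, ipLinear_apply, hX.2 i h1 hi, hY.2 i h1 hi,
        add_zero]⟩
    have hmid := (convex_convexHull ℝ (GammaA A)).midpoint_mem hX.1 hY.1
    have := smul_mem_CPPA hω hAdeg two_pos hmid
    rwa [two_smul, midpoint_add_self] at this

variable {fb : ℕ → MvPolynomial (Fin (n + 1)) ℝ} {Q : ℕ → Matrix A A ℝ} {p : ℕ}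

lemma momMat_mem_Jset (hQ : ∀ i ≤ p, ∀ x, eval x (fb i) = ip (Q i) (momMat A x))
    {x : Fin (n + 1) → ℝ} (hx : x ∈ Sbar fb p) : momMat A x ∈ Jset A Q p :=
  ⟨subset_convexHull ℝ _ ⟨x, hx.1, rfl⟩, fun i h1 hi => (hQ i hi x).symm.trans (hx.2 i h1 hi)⟩

lemma Jset_inter_GammaA (hQ : ∀ i ≤ p, ∀ x, eval x (fb i) = ip (Q i) (momMat A x)) :
    Jset A Q p ∩ GammaA A = momMat A '' Sbar fb p := by
  ext X
  constructor
  · rintro ⟨hJ, x, hx, rfl⟩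
    exact ⟨x, ⟨hx, fun i h1 hi => (hQ i hi x).trans (hJ.2 i h1 hi)⟩, rfl⟩
  · rintro ⟨x, hx, rfl⟩
    exact ⟨momMat_mem_Jset hQ hx, x, hx.1, rfl⟩

lemma forall_mem_Jset_mul_le_iff (hAtop : Finsupp.single 0 ω ∈ A)
    (hQ : ∀ i ≤ p, ∀ x, eval x (fb i) = ip (Q i) (momMat A x))
    (hface : IsFace (CPPA A) (Jset A Q p)) (c : ℝ) :
    (∀ X ∈ Jset A Q p, c * ip (H0mat A ω) X ≤ ip (Q 0) X) ↔
      ∀ x ∈ Sbar fb p, c * x 0 ^ (2 * ω) ≤ eval x (fb 0) := by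
  have h := hface.forall_nonneg_iff (ipLinear (Q 0) - c • ipLinear (H0mat A ω))
  simpa [Jset_inter_GammaA hQ, ip_H0mat_momMat hAtop, ← hQ 0 p.zero_le] using h

end MomentMatrix

theorem stmt15
    (n ω m : ℕ) (hn : 0 < n) (hω : 0 < ω) (hm : 0 < m)
    (A : Finset (Fin (n+1) →₀ ℕ)) (hA : A.Nonempty)
    (hAdeg : ∀ α ∈ A, ∑ i, α i = ω)
    (hAtop : Finsupp.single (0 : Fin (n+1)) ω ∈ A)
    (f : ℕ → MvPolynomial (Fin n) ℝ)
    (fb : ℕ → MvPolynomial (Fin (n+1)) ℝ)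
    (hfdeg : ∀ i ≤ m, (f i).totalDegree ≤ 2 * ω)
    (hfbhom : ∀ i ≤ m, (fb i).IsHomogeneous (2 * ω))
    (hfb1 : ∀ i ≤ m, ∀ w : Fin n → ℝ, eval (Fin.cons 1 w) (fb i) = eval w (f i))
    (Q : ℕ → Matrix A A ℝ)
    (hQsymm : ∀ i ≤ m, (Q i).IsSymm)
    (hQrep : ∀ i ≤ m, ∀ x : Fin (n+1) → ℝ, eval x (fb i) = ip (Q i) (momMat A x))
    (hfeas : (Sset f m).Nonempty)
    (hface : IsFace (CPPA A) (Jset A Q m)) :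
    erInf { y : ℝ | ∃ w ∈ Sset f m, y = eval w (f 0) }
        = erInf { y : ℝ | ∃ X ∈ Jset A Q m, ip (H0mat A ω) X = 1 ∧ y = ip (Q 0) X }
      ↔ ((∀ w ∈ Stilde fb m, 0 ≤ eval (Fin.cons 0 w) (fb 0)) ∨
          erInf { y : ℝ | ∃ w ∈ Sset f m, y = eval w (f 0) } = ⊥) := by
  refine eq_iff_or_eq_bot_of_forall_coe_le_iff fun c => ?_
  have hslice : ∃ X ∈ Jset A Q m, ip (H0mat A ω) X = 1 := by
    obtain ⟨w, hw⟩ := hfeas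
    exact ⟨momMat A (Fin.cons 1 w), momMat_mem_Jset hQrep ((cons_one_mem_Sbar_iff hfb1).2 hw),
      by simp [ip_H0mat_momMat hAtop]⟩
  calc (c : EReal) ≤ erInf { y : ℝ | ∃ X ∈ Jset A Q m, ip (H0mat A ω) X = 1 ∧ y = ip (Q 0) X }
      ↔ ∀ X ∈ Jset A Q m, ip (H0mat A ω) X = 1 → c ≤ ip (Q 0) X := by
        grind [coe_le_erInf_iff]
    _ ↔ ∀ X ∈ Jset A Q m, c * ip (H0mat A ω) X ≤ ip (Q 0) X :=
        forall_slice_le_iff_forall_mul_le (Jcone hω.ne' hAdeg Q m) (h := ipLinear _)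
          (q := ipLinear _) (fun X hX => ip_H0mat_nonneg hAtop hX.1) hslice c
    _ ↔ ∀ x ∈ Sbar fb m, c * x 0 ^ (2 * ω) ≤ eval x (fb 0) :=
        forall_mem_Jset_mul_le_iff hAtop hQrep hface c
    _ ↔ (∀ w ∈ Sset f m, c ≤ eval w (f 0)) ∧
          ∀ w ∈ Stilde fb m, 0 ≤ eval (Fin.cons 0 w) (fb 0) :=
        forall_mem_Sbar_mul_pow_le_iff (by omega) hfbhom hfb1 c
    _ ↔ (c : EReal) ≤ erInf { y : ℝ | ∃ w ∈ Sset f m, y = eval w (f 0) } ∧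
          ∀ w ∈ Stilde fb m, 0 ≤ eval (Fin.cons 0 w) (fb 0) := by
        grind [coe_le_erInf_iff]
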